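/- Let a_i, b_i, a_j, b_j, φ_i, φ_j, λ be real numbers with b_i > 0, b_j < 0, -a_j/b_j < -a_i/b_i, φ_i < 0, φ_i < -a_i/b_i, φ_j > 0, φ_j > -a_j/b_j, and 0 < λ < 1. Then the input u = (1-λ)·max{φ_i, -a_j/b_j} + λ·min{φ_j, -a_i/b_i} satisfies -a_j/b_j < u < -a_i/b_i, and consequently a_i + b_i·u < 0 and a_j + b_j·u < 0. -/

import Mathlib

/-- Case 4, blended law `k_l`: under the compatibility condition,
the convex combination `u = (1-λ)·max{φ_i, -a_j/b_j} + λ·min{φ_j, -a_i/b_i}`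
lies in the open feasible interval, hence satisfies both inequalities. -/
theorem stmt_11 (ai bi aj bj phi_i phi_j lam : ℝ)
    (hbi : 0 < bi) (hbj : bj < 0) (hc : -aj / bj < -ai / bi)
    (hpi1 : phi_i < 0) (hpi2 : phi_i < -ai / bi)
    (hpj1 : 0 < phi_j) (hpj2 : -aj / bj < phi_j)
    (hl1 : 0 < lam) (hl2 : lam < 1) :
    ∀ u : ℝ,
      u = (1 - lam) * max phi_i (-aj / bj) + lam * min phi_j (-ai / bi) →
      (-aj / bj < u ∧ u < -ai / bi) ∧ ai + bi * u < 0 ∧ aj + bj * u < 0 := by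
  intro u hu
  have hM1 : -aj / bj ≤ max phi_i (-aj / bj) := le_max_right _ _
  have hM2 : max phi_i (-aj / bj) < -ai / bi := max_lt hpi2 hc
  have hm1 : -aj / bj < min phi_j (-ai / bi) := lt_min hpj2 hc
  have hm2 : min phi_j (-ai / bi) ≤ -ai / bi := min_le_right _ _
  -- Each bound is strict for only one of the two blended terms; both weights are positive,
  -- so the strictness passes to the convex combination.
  have hL : -aj / bj < u := by
    rw [hu]
    linarith [mul_le_mul_of_nonneg_left hM1 (sub_pos.2 hl2).le, mul_lt_mul_of_pos_left hm1 hl1]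
  have hU : u < -ai / bi := by
    rw [hu]
    linarith [mul_lt_mul_of_pos_left hM2 (sub_pos.2 hl2), mul_le_mul_of_nonneg_left hm2 hl1.le]
  refine ⟨⟨hL, hU⟩, ?_, ?_⟩
  · linarith [(lt_div_iff₀ hbi).1 hU]
  · linarith [(div_lt_iff_of_neg hbj).1 hL]
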